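/- Let W be an LS(W)⁺-homogeneous closure space in which the empty set is closed, and suppose W fails exchange over the empty set. Then for every element b of W, cl({a : a < b}) = {a : a ≤ b}, where a ≤ b means a ∈ cl({b}) and a < b means a ≤ b but not b ≤ a. -/

import Mathlib

open Cardinal Set

universe u v

variable {X : Type u}

/-- `cl` is a closure operator: monotonicity and transitivity. -/
def IsClosure (cl : Set X → Set X) : Prop :=
  (∀ A : Set X, A ⊆ cl A) ∧ ∀ A B : Set X, A ⊆ cl B → cl A ⊆ cl B

/-- `f` is an automorphism of the closure space `(X, cl)`. -/
def IsAuto (cl : Set X → Set X) (f : X → X) : Prop :=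
  Function.Bijective f ∧ ∀ A : Set X, f '' cl A = cl (f '' A)

/-- The closure space `(X, cl)` is `μ`-homogeneous. -/
def IsHomog (cl : Set X → Set X) (μ : Cardinal.{u}) : Prop :=
  ∀ A : Set X, #A < μ → ∀ a b : X, a ∉ cl A → b ∉ cl A →
    ∃ f : X → X, IsAuto cl f ∧ (∀ x ∈ A, f x = x) ∧ f a = b

/-- The closure space `(X, cl)` has exchange over `A`. -/
def ExchOver (cl : Set X → Set X) (A : Set X) : Prop :=
  ∀ a b : X, a ∈ cl (A ∪ {b}) → a ∉ cl A → b ∈ cl (A ∪ {a})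

/-- The localization `W_A`: the closure space on `X \ A` with
`cl^{W_A}(B) = cl(A ∪ B) ∩ (X \ A)`. -/
def locCl (cl : Set X → Set X) (A : Set X) :
    Set {x : X // x ∉ A} → Set {x : X // x ∉ A} :=
  fun B => {x | (x : X) ∈ cl (A ∪ (Subtype.val '' B))}

/-- `κ(W)`: the least infinite cardinal `κ` such that whenever `a ∈ cl A` there is
`A₀ ⊆ A` with `|A₀| < κ` and `a ∈ cl A₀`. -/
noncomputable def kappaCard (cl : Set X → Set X) : Cardinal.{u} :=
  sInf {κ : Cardinal.{u} | ℵ₀ ≤ κ ∧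
    ∀ (A : Set X) (a : X), a ∈ cl A → ∃ A₀, A₀ ⊆ A ∧ #A₀ < κ ∧ a ∈ cl A₀}

/-- `LS(W)`: the least infinite cardinal `μ` such that `|cl A| ≤ |A| + μ` for all `A`. -/
noncomputable def LSCard (cl : Set X → Set X) : Cardinal.{u} :=
  sInf {μ : Cardinal.{u} | ℵ₀ ≤ μ ∧ ∀ A : Set X, #(cl A) ≤ #A + μ}

theorem LSCard_spec (cl : Set X → Set X) :
    ℵ₀ ≤ LSCard cl ∧ ∀ A : Set X, #(cl A) ≤ #A + LSCard cl := by
  have hne : {μ : Cardinal.{u} | ℵ₀ ≤ μ ∧ ∀ A : Set X, #(cl A) ≤ #A + μ}.Nonempty :=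
    ⟨max ℵ₀ #X, le_max_left _ _, fun A =>
      ((mk_set_le _).trans (le_max_right _ _)).trans (self_le_add_left _ _)⟩
  exact csInf_mem hne

theorem IsAuto.mem_iff {cl : Set X → Set X} {f : X → X} (hf : IsAuto cl f) (x y : X) :
    f x ∈ cl {f y} ↔ x ∈ cl {y} := by
  have h := hf.2 {y}
  rw [Set.image_singleton] at h
  rw [← h]
  exact hf.1.1.mem_set_image

/-- If `W` is `LS(W)⁺`-homogeneous, `∅` is closed, and exchange over `∅` fails,
then for every `b`, `cl({a : a < b}) = {a : a ≤ b}` (where `a ≤ b` iff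
`a ∈ cl {b}` and `a < b` iff `a ≤ b` but not `b ≤ a`). -/
theorem stmt10 (cl : Set X → Set X) (hcl : IsClosure cl) (hempty : cl ∅ = ∅)
    (hhom : IsHomog cl (Order.succ (LSCard cl))) (hfail : ¬ ExchOver cl ∅)
    (b : X) :
    cl {a : X | a ∈ cl {b} ∧ b ∉ cl {a}} = {a : X | a ∈ cl {b}} := by
  obtain ⟨hsub, htr⟩ := hcl
  obtain ⟨hinf, hLS⟩ := LSCard_spec cl
  have hAb : {a : X | a ∈ cl {b} ∧ b ∉ cl {a}} ⊆ cl {b} := fun x hx => hx.1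
  apply Set.Subset.antisymm
  · exact htr _ _ hAb
  apply htr
  rw [Set.singleton_subset_iff]
  by_contra hb
  have hcard : #{a : X | a ∈ cl {b} ∧ b ∉ cl {a}} < Order.succ (LSCard cl) := by
    rw [Order.lt_succ_iff]
    refine (mk_le_mk_of_subset hAb).trans ((hLS _).trans ?_)
    rw [mk_singleton]
    exact (add_eq_right hinf (one_le_aleph0.trans hinf)).le
  obtain ⟨c, hbc, hcb⟩ : ∃ c, b ∈ cl {c} ∧ c ∉ cl {b} := by
    unfold ExchOver at hfail
    push Not at hfail
    obtain ⟨a0, b0, h1, h2, h3⟩ := hfail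
    rw [Set.empty_union] at h1 h3
    obtain ⟨g, hg, -, hgab⟩ := hhom ∅ (by simp) a0 b h2 (by simp [hempty])
    refine ⟨g b0, ?_, ?_⟩
    · rw [← hgab, hg.mem_iff]; exact h1
    · rw [← hgab, hg.mem_iff]; exact h3
  obtain ⟨f, hf, hfix, hfb⟩ := hhom _ hcard b c hb (fun h => hcb (htr _ _ hAb h))
  obtain ⟨x, hx⟩ := hf.1.2 b
  have hxA : x ∈ cl {b} ∧ b ∉ cl {x} := by
    rw [← hf.mem_iff x b, ← hf.mem_iff b x, hx, hfb]
    exact ⟨hbc, hcb⟩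
  have hxb : x = b := (hfix x hxA).symm.trans hx
  subst hxb
  exact hxA.2 (hsub _ rfl)
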